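/- arXiv:2005.13658 — 3 statements merged into one kernel-verified Lean document; each statement's English description precedes it below -/
import Mathlib

section
/- Let z ∈ ℂ² be a unit vector, let P be the orthogonal projection onto the orthogonal complement of z (i.e., P = I − |z⟩⟨z|), and let U be a unitary operator on ℂ². Then ∑_{n=0}^∞ ‖(PU)^n z‖² = 1 if Uz = z up to phase (z is an eigenvector of U), and ∑_{n=0}^∞ ‖(PU)^n z‖² = 2 otherwise. -/
/-- **qubit case.** For a unit vector `z ∈ ℂ²`, `P = I - |z⟩⟨z|`, and `U`
unitary, the series `∑_n ‖(PU)^n z‖²` equals `1` if `z` is an eigenvector of `U`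
(`Uz = cz` for some phase `c`), and equals `2` otherwise. -/
theorem sum_sq_norms_iterates_qubit
    (z : EuclideanSpace ℂ (Fin 2)) (hz : ‖z‖ = 1)
    (U P : EuclideanSpace ℂ (Fin 2) →L[ℂ] EuclideanSpace ℂ (Fin 2))
    (hU : U ∈ unitary (EuclideanSpace ℂ (Fin 2) →L[ℂ] EuclideanSpace ℂ (Fin 2)))
    (hP : P = 1 - (innerSL ℂ z).smulRight z) :
    ((∃ c : ℂ, U z = c • z) → ∑' n : ℕ, ‖((P * U) ^ n) z‖ ^ 2 = 1)
    ∧ ((¬ ∃ c : ℂ, U z = c • z) → ∑' n : ℕ, ‖((P * U) ^ n) z‖ ^ 2 = 2) := by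
  have hPx : ∀ x, P x = x - (inner ℂ z x) • z := by
    intro x; rw [hP]; simp
  have hzz : inner ℂ z z = (1 : ℂ) := by
    rw [inner_self_eq_norm_sq_to_K, hz]; simp
  have hUi : ∀ x y, inner ℂ (U x) (U y) = (inner ℂ x y : ℂ) := by
    intro x y
    rw [← ContinuousLinearMap.adjoint_inner_right, ← ContinuousLinearMap.star_eq_adjoint,
      ← ContinuousLinearMap.mul_apply, Unitary.star_mul_self_of_mem hU]
    simp
  have hUn : ∀ x, ‖U x‖ = ‖x‖ := by
    intro x
    have h := hUi x x
    rw [inner_self_eq_norm_sq_to_K, inner_self_eq_norm_sq_to_K] at h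
    have h2 : ‖U x‖ ^ 2 = ‖x‖ ^ 2 := by exact_mod_cast h
    exact (sq_eq_sq₀ (norm_nonneg _) (norm_nonneg _)).1 h2
  have horth : ∀ x, inner ℂ z (P x) = (0 : ℂ) := by
    intro x; rw [hPx, inner_sub_right, inner_smul_right, hzz]; simp
  have hdec : ∀ x, x = (inner ℂ z x : ℂ) • z + P x := by
    intro x; rw [hPx]; abel
  have hpyth : ∀ x, ‖x‖ ^ 2 = ‖(inner ℂ z x : ℂ)‖ ^ 2 + ‖P x‖ ^ 2 := by
    intro x
    have h := norm_add_sq_eq_norm_sq_add_norm_sq_of_inner_eq_zero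
      ((inner ℂ z x : ℂ) • z) (P x) (by rw [inner_smul_left, horth]; simp : inner ℂ _ _ = (0:ℂ))
    rw [← hdec x, norm_smul, hz] at h
    nlinarith
  have h0 : ∀ n : ℕ, ((P * U) ^ (n + 1)) z = ((P * U) ^ n) (P (U z)) := by
    intro n; rw [pow_succ]; rfl
  constructor
  · rintro ⟨c, hc⟩
    have hw : P (U z) = 0 := by
      rw [hPx, hc, inner_smul_right, hzz]; simp
    rw [tsum_eq_single 0]
    · simp [hz]
    · intro n hn
      obtain ⟨m, rfl⟩ := Nat.exists_eq_succ_of_ne_zero hn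
      rw [Nat.succ_eq_add_one, h0, hw, map_zero, norm_zero]; norm_num
  · intro hne
    set w := P (U z) with hw
    set a : ℂ := inner ℂ z (U z) with ha
    have hw0 : w ≠ 0 := by
      intro h
      apply hne
      refine ⟨a, ?_⟩
      have := hdec (U z)
      rw [← hw, h, add_zero] at this
      exact this
    have hwpos : 0 < ‖w‖ ^ 2 := by positivity
    have hs : 1 = ‖a‖ ^ 2 + ‖w‖ ^ 2 := by
      have := hpyth (U z)
      rw [hUn, hz] at this
      simpa using this
    -- one-dimensionality
    have hz0 : z ≠ 0 := by rintro rfl; simp at hz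
    obtain ⟨μ, hμ⟩ : ∃ μ : ℂ, P (U w) = μ • w := by
      haveI : Fact (Module.finrank ℂ (EuclideanSpace ℂ (Fin 2)) = 1 + 1) := ⟨by simp⟩
      have h1 := Submodule.finrank_orthogonal_span_singleton (𝕜 := ℂ) (n := 1) hz0
      have hm : ∀ x, P x ∈ (Submodule.span ℂ {z})ᗮ := fun x =>
        Submodule.mem_orthogonal_singleton_iff_inner_right.2 (horth x)
      have := (finrank_eq_one_iff_of_nonzero' (⟨w, hm _⟩ : (Submodule.span ℂ {z})ᗮ)
        (by intro h; exact hw0 (congrArg Subtype.val h))).1 h1 ⟨P (U w), hm _⟩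
      obtain ⟨c, hc⟩ := this
      exact ⟨c, (congrArg Subtype.val hc).symm⟩
    set b : ℂ := inner ℂ z (U w) with hb
    have e1 : ‖w‖ ^ 2 = ‖b‖ ^ 2 + ‖μ‖ ^ 2 * ‖w‖ ^ 2 := by
      have := hpyth (U w)
      rw [hUn, hμ, norm_smul, mul_pow] at this
      exact this
    have e2 : ‖a‖ ^ 2 * ‖b‖ ^ 2 = ‖μ‖ ^ 2 * (‖w‖ ^ 2) ^ 2 := by
      have h := hUi z w
      have hzw : inner ℂ z w = (0 : ℂ) := horth _
      have hwz : inner ℂ w z = (0 : ℂ) := inner_eq_zero_symm.1 hzw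
      rw [hzw, hdec (U z), hdec (U w), hμ, ← hw, ← ha, ← hb] at h
      simp only [inner_add_left, inner_add_right, inner_smul_left, inner_smul_right,
        hzz, hzw, hwz, inner_self_eq_norm_sq_to_K] at h
      have h' : (starRingEnd ℂ) a * b = -(μ * ((‖w‖ : ℂ)) ^ 2) := by
        rw [eq_neg_iff_add_eq_zero, ← h]; simp; ring
      have h3 := congrArg norm h'
      simp only [norm_mul, norm_neg, norm_pow, RCLike.norm_conj, Complex.norm_real,
        norm_norm] at h3
      rw [← mul_pow, h3]; ring
    have hMA : ‖μ‖ ^ 2 = ‖a‖ ^ 2 := by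
      have hb' : ‖b‖ ^ 2 = ‖w‖ ^ 2 - ‖μ‖ ^ 2 * ‖w‖ ^ 2 := by linarith
      have ha' : ‖a‖ ^ 2 = 1 - ‖w‖ ^ 2 := by linarith
      rw [hb', ha'] at e2
      rw [ha']
      have : ‖w‖ ^ 2 * (‖μ‖ ^ 2 - (1 - ‖w‖ ^ 2)) = 0 := by linear_combination -e2
      rcases mul_eq_zero.1 this with h | h
      · exact absurd h hwpos.ne'
      · linarith
    have hpow : ∀ n : ℕ, ((P * U) ^ n) w = μ ^ n • w := by
      intro n
      induction n with
      | zero => simp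
      | succ k ih =>
        rw [pow_succ, ContinuousLinearMap.mul_apply, ContinuousLinearMap.mul_apply, hμ,
          map_smul, ih, smul_smul, pow_succ, mul_comm]
    have hterm : ∀ n : ℕ, ‖((P * U) ^ (n + 1)) z‖ ^ 2 = (‖a‖ ^ 2) ^ n * ‖w‖ ^ 2 := by
      intro n
      rw [h0, hpow, norm_smul, norm_pow, mul_pow, ← hMA]; ring
    have hg : HasSum (fun n : ℕ => ‖((P * U) ^ (n + 1)) z‖ ^ 2) 1 := by
      simp_rw [hterm]
      have := (hasSum_geometric_of_lt_one (r := ‖a‖ ^ 2) (by positivity)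
        (by linarith)).mul_right (‖w‖ ^ 2)
      have h1 : (1 - ‖a‖ ^ 2)⁻¹ * ‖w‖ ^ 2 = 1 := by
        rw [show 1 - ‖a‖ ^ 2 = ‖w‖ ^ 2 by linarith]
        exact inv_mul_cancel₀ hwpos.ne'
      rwa [h1] at this
    have h2 := (hasSum_nat_add_iff (f := fun n : ℕ => ‖((P * U) ^ n) z‖ ^ 2) 1).1 hg
    rw [h2.tsum_eq]
    simp [hz]; norm_num
end

section
/- Let R be an orthogonal operator on ℝ^2 given by rotation through an angle φ (under the identification of ℝ² with ℂ, Rw = e^{iφ}w), let z ∈ ℝ² be a unit vector and P the orthogonal projection onto the orthogonal complement of z. If φ is not a multiple of π, then ∑_{n=0}^∞ ‖(PR)^n z‖² = 2; if φ ∈ {0, π} (mod 2π) then ∑_{n=0}^∞ ‖(PR)^n z‖² = 1. -/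
/-- Identify `ℝ²` with `ℂ`. Let `R` be the rotation through angle `φ`
(`Rw = e^{iφ}w`), `z` a unit vector, and `P w = w − ⟨z,w⟩_ℝ z` the orthogonal projection onto
the orthogonal complement of `z`. If `φ` is not a multiple of `π`, then
`∑_n ‖(P∘R)^n z‖² = 2`; if `φ` is a multiple of `π`, the sum equals `1`. -/
theorem sum_sq_norms_iterates_rotation (φ : ℝ) (z : ℂ) (hz : ‖z‖ = 1)
    (R P : ℂ → ℂ)
    (hR : ∀ w, R w = Complex.exp (φ * Complex.I) * w)
    (hP : ∀ w, P w = w - ((starRingEnd ℂ) z * w).re • z) :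
    ((¬ ∃ m : ℤ, φ = m * Real.pi) → ∑' n : ℕ, ‖(P ∘ R)^[n] z‖ ^ 2 = 2)
    ∧ ((∃ m : ℤ, φ = m * Real.pi) → ∑' n : ℕ, ‖(P ∘ R)^[n] z‖ ^ 2 = 1) := by
  have hzz : (starRingEnd ℂ) z * z = 1 := by
    rw [mul_comm, Complex.mul_conj, Complex.normSq_eq_norm_sq, hz]; norm_num
  have hE : Complex.exp (φ * Complex.I)
      = (Real.cos φ : ℂ) + (Real.sin φ : ℂ) * Complex.I := by
    rw [Complex.exp_mul_I]; push_cast; rfl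
  have hI := Complex.I_mul_I
  have key : ∀ a b : ℝ, (P ∘ R) (((a : ℂ) + (b : ℂ) * Complex.I) * z)
      = (((Real.cos φ * b + Real.sin φ * a : ℝ) : ℂ) * Complex.I) * z := by
    intro a b
    have h1 : (starRingEnd ℂ) z * (((Real.cos φ : ℂ) + (Real.sin φ : ℂ) * Complex.I) *
        (((a : ℂ) + (b : ℂ) * Complex.I) * z))
        = ((Real.cos φ : ℂ) + (Real.sin φ : ℂ) * Complex.I) * ((a : ℂ) + (b : ℂ) * Complex.I) := by
      linear_combination (((Real.cos φ : ℂ) + (Real.sin φ : ℂ) * Complex.I) *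
        ((a : ℂ) + (b : ℂ) * Complex.I)) * hzz
    have h2 : (((Real.cos φ : ℂ) + (Real.sin φ : ℂ) * Complex.I) *
        ((a : ℂ) + (b : ℂ) * Complex.I)).re = Real.cos φ * a - Real.sin φ * b := by
      simp [-Complex.ofReal_cos, -Complex.ofReal_sin]
    rw [Function.comp_apply, hP, hR, hE, h1, h2, Complex.real_smul]
    simp only [Complex.ofReal_add, Complex.ofReal_sub, Complex.ofReal_mul]
    linear_combination ((Real.sin φ : ℂ) * b * z) * hI
  have hit : ∀ n : ℕ, (P ∘ R)^[n + 1] z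
      = (((Real.cos φ ^ n * Real.sin φ : ℝ) : ℂ) * Complex.I) * z := by
    intro n
    induction n with
    | zero => simpa using key 1 0
    | succ k ih =>
      rw [Function.iterate_succ_apply', ih]
      have h := key 0 (Real.cos φ ^ k * Real.sin φ)
      rw [Complex.ofReal_zero, zero_add] at h
      rw [h]
      congr 3
      ring
  have hn : ∀ n : ℕ, ‖(P ∘ R)^[n + 1] z‖ ^ 2 = (Real.cos φ ^ 2) ^ n * Real.sin φ ^ 2 := by
    intro n
    rw [hit, norm_mul, norm_mul, hz, Complex.norm_I, Complex.norm_real, Real.norm_eq_abs,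
      mul_one, mul_one, sq_abs]
    ring
  have hsc := Real.sin_sq_add_cos_sq φ
  have hmain : ∀ s : ℝ, HasSum (fun n : ℕ => (Real.cos φ ^ 2) ^ n * Real.sin φ ^ 2) s →
      ∑' n : ℕ, ‖(P ∘ R)^[n] z‖ ^ 2 = s + 1 := by
    intro s hs
    have h := (hasSum_nat_add_iff (f := fun n : ℕ => ‖(P ∘ R)^[n] z‖ ^ 2) (g := s) 1).1
      (by simpa only [hn] using hs)
    rw [h.tsum_eq]
    simp [hz]
  have hsin : (∃ m : ℤ, φ = m * Real.pi) ↔ Real.sin φ = 0 := by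
    rw [Real.sin_eq_zero_iff]
    exact exists_congr fun m => eq_comm
  rw [hsin]
  constructor
  · intro h0
    have hpos : 0 < Real.sin φ ^ 2 := by positivity
    have hg := (hasSum_geometric_of_lt_one (sq_nonneg (Real.cos φ))
      (by linarith)).mul_right (Real.sin φ ^ 2)
    have e : 1 - Real.cos φ ^ 2 = Real.sin φ ^ 2 := by linarith
    rw [e, inv_mul_cancel₀ hpos.ne'] at hg
    rw [hmain 1 hg]; norm_num
  · intro h0
    rw [hmain 0 (by simp [h0, hasSum_zero])]; norm_num
end

section
/- Let R be the reflection of ℝ² about the line through the origin making angle φ with the first coordinate axis (under the identification ℝ² ≅ ℂ, Rw = e^{2iφ}·conj(w)), let z = e^{iθ} be a unit vector and P the orthogonal projection onto the orthogonal complement of z. If z is not an eigenvector of R (i.e., φ − θ is not a multiple of π/2), then ∑_{n=0}^∞ ‖(PR)^n z‖² = 2; if z is an eigenvector of R then the sum equals 1. -/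
/-- Identify `ℝ²` with `ℂ`. Let `R` be the reflection about the line
through the origin at angle `φ` (`Rw = e^{2iφ} w̄`), `z = e^{iθ}` a unit vector, and
`P w = w − ⟨z,w⟩_ℝ z`. If `z` is not an eigenvector of `R` (i.e. `φ − θ` is not a multiple
of `π/2`), then `∑_n ‖(P∘R)^n z‖² = 2`; if it is, the sum equals `1`. -/
theorem sum_sq_norms_iterates_reflection (φ θ : ℝ) (z : ℂ)
    (hzdef : z = Complex.exp (θ * Complex.I))
    (R P : ℂ → ℂ)
    (hR : ∀ w, R w = Complex.exp (2 * φ * Complex.I) * (starRingEnd ℂ) w)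
    (hP : ∀ w, P w = w - ((starRingEnd ℂ) z * w).re • z) :
    ((¬ ∃ m : ℤ, φ - θ = m * (Real.pi / 2)) → ∑' n : ℕ, ‖(P ∘ R)^[n] z‖ ^ 2 = 2)
    ∧ ((∃ m : ℤ, φ - θ = m * (Real.pi / 2)) → ∑' n : ℕ, ‖(P ∘ R)^[n] z‖ ^ 2 = 1) := by
  set c := Real.cos (2 * (φ - θ)) with hc
  set s := Real.sin (2 * (φ - θ)) with hs
  have hcs : s ^ 2 + c ^ 2 = 1 := Real.sin_sq_add_cos_sq _
  have hzz : (starRingEnd ℂ) z * z = 1 := by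
    rw [hzdef, ← Complex.exp_conj, ← Complex.exp_add]
    simp
  have hnz : ‖z‖ = 1 := by rw [hzdef, Complex.norm_exp_ofReal_mul_I]
  have hRz : Complex.exp (2 * φ * Complex.I) * (starRingEnd ℂ) z
      = ((c : ℂ) + s * Complex.I) * z := by
    have h1 : (c : ℂ) + s * Complex.I = Complex.exp ((2 * (φ - θ) : ℝ) * Complex.I) := by
      rw [Complex.exp_mul_I, hc, hs, Complex.ofReal_cos, Complex.ofReal_sin]
    rw [h1, hzdef, ← Complex.exp_conj, ← Complex.exp_add, ← Complex.exp_add]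
    congr 1
    simp only [map_mul, Complex.conj_ofReal, Complex.conj_I]
    push_cast
    ring
  have hPw : ∀ a : ℂ, P (a * z) = (a.im * Complex.I) * z := by
    intro a
    rw [hP, show (starRingEnd ℂ) z * (a * z) = a by rw [mul_left_comm, hzz, mul_one],
      Complex.real_smul, ← sub_mul]
    congr 1
    apply Complex.ext <;> simp
  have hPR : ∀ a : ℂ, (P ∘ R) (a * z)
      = (((starRingEnd ℂ) a * ((c : ℂ) + s * Complex.I)).im * Complex.I) * z := by
    intro a
    rw [Function.comp_apply, hR, map_mul, mul_left_comm, hRz, ← mul_assoc, hPw]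
  have hit : ∀ n : ℕ, (P ∘ R)^[n + 1] z = (((s * (-c) ^ n : ℝ) : ℂ) * Complex.I) * z := by
    intro n
    induction n with
    | zero =>
      have := hPR 1
      simpa using this
    | succ k ih =>
      rw [Function.iterate_succ_apply', ih, hPR]
      congr 3
      generalize hb : s * (-c) ^ k = b
      rw [pow_succ, ← mul_assoc, hb]
      simp
  have hterm : ∀ n : ℕ, ‖(P ∘ R)^[n + 1] z‖ ^ 2 = s ^ 2 * (c ^ 2) ^ n := by
    intro n
    rw [hit, norm_mul, norm_mul, hnz, Complex.norm_I, Complex.norm_real, mul_one, mul_one,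
      Real.norm_eq_abs, sq_abs, mul_pow, ← pow_mul, mul_comm n 2, pow_mul, neg_sq]
  have hiff : s = 0 ↔ ∃ m : ℤ, φ - θ = m * (Real.pi / 2) := by
    rw [hs, Real.sin_eq_zero_iff]
    constructor
    · rintro ⟨m, hm⟩
      exact ⟨m, by linarith⟩
    · rintro ⟨m, hm⟩
      exact ⟨m, by linarith⟩
  rw [← hiff]
  have key : ∀ t : ℝ, HasSum (fun n : ℕ => s ^ 2 * (c ^ 2) ^ n) t →
      ∑' n : ℕ, ‖(P ∘ R)^[n] z‖ ^ 2 = 1 + t := by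
    intro t ht
    have h2 : HasSum (fun n : ℕ => ‖(P ∘ R)^[n + 1] z‖ ^ 2) t := by
      simpa only [hterm] using ht
    have h3 := h2.zero_add (f := fun n : ℕ => ‖(P ∘ R)^[n] z‖ ^ 2)
    rw [h3.tsum_eq]
    simp [hnz]
  constructor
  · intro h
    have hs2 : 0 < s ^ 2 := by positivity
    have hg := (hasSum_geometric_of_lt_one (sq_nonneg c) (by linarith)).mul_left (s ^ 2)
    rw [key _ hg, show 1 - c ^ 2 = s ^ 2 by linarith, mul_inv_cancel₀ hs2.ne']
    norm_num
  · intro h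
    rw [key 0 (by simp [h, hasSum_zero])]
    norm_num
end
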